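/- Let g be a finite-dimensional real Lie algebra with a norm, and let P(g) = C([0,1], g) be the space of continuous paths [0,1] → g. The multiplication law (γ·δ)(t) = γ(t) + A_γ(t)(δ(t)) turns P(g) into a group: the multiplication is associative, the constant path 0 is a two-sided identity, and for each γ ∈ P(g) the path ι(γ)(t) = −A_γ(t)⁻¹(γ(t)) is a two-sided inverse of γ. -/

import Mathlib

/-- `IsLieBracket B` says that the bilinear map `B = ⁅·,·⁆` makes the
(finite-dimensional, normed) real vector space `g` into a real Lie algebra:
it is alternating and satisfies the Jacobi identity (in Leibniz form). -/
def IsLieBracket {g : Type*} [NormedAddCommGroup g] [NormedSpace ℝ g]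
    (B : g →ₗ[ℝ] g →ₗ[ℝ] g) : Prop :=
  (∀ x : g, B x x = 0) ∧
  (∀ x y z : g, B x (B y z) = B (B x y) z + B y (B x z))

/-- The adjoint endomorphism `ad x = ⁅x, ·⁆` as a continuous linear map. -/
noncomputable def adL {g : Type*} [NormedAddCommGroup g] [NormedSpace ℝ g]
    [FiniteDimensional ℝ g] (B : g →ₗ[ℝ] g →ₗ[ℝ] g) (x : g) : g →L[ℝ] g :=
  LinearMap.toContinuousLinearMap (B x)

/-- `IsTransport B γ A` says that `A : [0,1] → End(g)` is a continuously
differentiable path of linear endomorphisms of `g` with `A 0 = id` and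
`A' t = ad (γ t) ∘ A t` for `t ∈ [0,1]` (one-sided derivatives at the
endpoints, and the derivative is continuous on `[0,1]`). -/
def IsTransport {g : Type*} [NormedAddCommGroup g] [NormedSpace ℝ g]
    [FiniteDimensional ℝ g] (B : g →ₗ[ℝ] g →ₗ[ℝ] g)
    (γ : ℝ → g) (A : ℝ → (g →L[ℝ] g)) : Prop :=
  A 0 = 1 ∧
  (∀ t ∈ Set.Icc (0:ℝ) 1,
    HasDerivWithinAt A ((adL B (γ t)).comp (A t)) (Set.Icc (0:ℝ) 1) t) ∧
  ContinuousOn (fun t => (adL B (γ t)).comp (A t)) (Set.Icc (0:ℝ) 1)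

/-- The path `A_γ : [0,1] → End(g)`, i.e. the unique continuously differentiable
solution of `A 0 = id`, `A' t = ad (γ t) ∘ A t` (chosen via choice; for a
continuous path `γ` it exists and is unique on `[0,1]`). -/
noncomputable def transport {g : Type*} [NormedAddCommGroup g] [NormedSpace ℝ g]
    [FiniteDimensional ℝ g] (B : g →ₗ[ℝ] g →ₗ[ℝ] g) (γ : ℝ → g) :
    ℝ → (g →L[ℝ] g) :=
  letI := Classical.propDecidable (∃ A : ℝ → (g →L[ℝ] g), IsTransport B γ A)
  if h : ∃ A : ℝ → (g →L[ℝ] g), IsTransport B γ A then h.choose else fun _ => 1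

/-- Extension of a continuous path `[0,1] → g` to all of `ℝ` (constant outside `[0,1]`). -/
noncomputable def pathExt {g : Type*} [TopologicalSpace g]
    (γ : C(Set.Icc (0:ℝ) 1, g)) : ℝ → g :=
  Set.IccExtend zero_le_one ⇑γ

/-- The Duistermaat–Kolk multiplication of paths: `(γ · δ)(t) = γ t + A_γ(t) (δ t)`,
as a `g`-valued function on `[0,1]`. -/
noncomputable def pathMul {g : Type*} [NormedAddCommGroup g] [NormedSpace ℝ g]
    [FiniteDimensional ℝ g] (B : g →ₗ[ℝ] g →ₗ[ℝ] g)
    (γ δ : C(Set.Icc (0:ℝ) 1, g)) : Set.Icc (0:ℝ) 1 → g :=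
  fun t => γ t + transport B (pathExt γ) t (δ t)

/-- The Duistermaat–Kolk inversion of paths: `ι(γ)(t) = -A_γ(t)⁻¹ (γ t)`,
as a `g`-valued function on `[0,1]`. -/
noncomputable def pathInv {g : Type*} [NormedAddCommGroup g] [NormedSpace ℝ g]
    [FiniteDimensional ℝ g] (B : g →ₗ[ℝ] g →ₗ[ℝ] g)
    (γ : C(Set.Icc (0:ℝ) 1, g)) : Set.Icc (0:ℝ) 1 → g :=
  fun t => -(Ring.inverse (transport B (pathExt γ) t) (γ t))

/-! The proof rests on two properties of the transport `A_γ`, both consequences of uniqueness for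
linear ODEs. By the Leibniz rule `A_γ(t)⁅x, y⁆` and `⁅A_γ(t) x, A_γ(t) y⁆` solve the same equation,
so `A_γ(t)` preserves the bracket. Therefore `(A_γ A_δ)' = (ad γ + A_γ ad(δ) A_γ⁻¹) A_γ A_δ =
ad(γ + A_γ δ) A_γ A_δ`, that is `A_{γ·δ} = A_γ A_δ`, which is associativity. For the inverse,
uniqueness backwards in time makes `A_γ(t)` injective, hence invertible, so `γ·ι(γ) = 0` holds
pointwise; then `A_γ A_{ι(γ)} = A_0 = 1` yields `ι(γ)·γ = 0` with no equation for `A_γ⁻¹`. -/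

section LinearODE

open Set Metric
open scoped Nat

variable {E : Type*} [NormedAddCommGroup E] [NormedSpace ℝ E]
  {c : ℝ → E →L[ℝ] E} {t₀ : ℝ} {x₀ : E}

/-- The terms of the Peano–Baker series, whose sum solves `f' t = c t (f t)`, `f t₀ = x₀`. They are
the differences of consecutive Picard iterates. -/
noncomputable def peanoBakerTerm (c : ℝ → E →L[ℝ] E) (t₀ : ℝ) (x₀ : E) : ℕ → ℝ → E
  | 0 => fun _ => x₀
  | n + 1 => fun t => ∫ s in t₀..t, c s (peanoBakerTerm c t₀ x₀ n s)

theorem continuous_peanoBakerTerm (hc : Continuous c) (n : ℕ) :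
    Continuous (peanoBakerTerm c t₀ x₀ n) := by
  induction n with
  | zero => exact continuous_const
  | succ n ih =>
    exact intervalIntegral.continuous_primitive
      (fun _ _ => (hc.clm_apply ih).intervalIntegrable _ _) t₀

theorem hasDerivAt_peanoBakerTerm_succ [CompleteSpace E] (hc : Continuous c) (n : ℕ) (t : ℝ) :
    HasDerivAt (peanoBakerTerm c t₀ x₀ (n + 1)) (c t (peanoBakerTerm c t₀ x₀ n t)) t :=
  ((hc.clm_apply (continuous_peanoBakerTerm hc n)).integral_hasStrictDerivAt t₀ t).hasDerivAt

theorem norm_peanoBakerTerm_le (hc : Continuous c) {r K : ℝ}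
    (hK : ∀ s ∈ closedBall t₀ r, ‖c s‖ ≤ K) (n : ℕ) {t : ℝ} (ht : t ∈ closedBall t₀ r) :
    ‖peanoBakerTerm c t₀ x₀ n t‖ ≤ ‖x₀‖ * ((K * |t - t₀|) ^ n / n !) := by
  induction n generalizing t with
  | zero => simp [peanoBakerTerm]
  | succ n ih =>
    have hball : ∀ s ∈ uIoc t₀ t, s ∈ closedBall t₀ r := fun s hs =>
      mem_closedBall.2 <| (abs_sub_left_of_mem_uIcc (uIoc_subset_uIcc hs)).trans ht
    have hbound : ∀ s ∈ uIoc t₀ t, ‖c s (peanoBakerTerm c t₀ x₀ n s)‖ ≤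
        K * (‖x₀‖ * (K ^ n / n !)) * |s - t₀| ^ n := fun s hs => by
      refine ((c s).le_of_opNorm_le_of_le (hK s (hball s hs)) (ih (hball s hs))).trans_eq ?_
      ring
    calc ‖peanoBakerTerm c t₀ x₀ (n + 1) t‖
        ≤ ∫ s in uIoc t₀ t, ‖c s (peanoBakerTerm c t₀ x₀ n s)‖ :=
          intervalIntegral.norm_integral_le_integral_norm_uIoc
      _ ≤ ∫ s in uIoc t₀ t, K * (‖x₀‖ * (K ^ n / n !)) * |s - t₀| ^ n :=
          MeasureTheory.setIntegral_mono_on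
            (hc.clm_apply (continuous_peanoBakerTerm hc n)).norm.integrableOn_uIoc
            (by fun_prop : Continuous fun s : ℝ =>
              K * (‖x₀‖ * (K ^ n / n !)) * |s - t₀| ^ n).integrableOn_uIoc
            measurableSet_uIoc hbound
      _ = ‖x₀‖ * ((K * |t - t₀|) ^ (n + 1) / (n + 1)!) := by
          rw [MeasureTheory.integral_const_mul, integral_pow_abs_sub_uIoc, Nat.factorial_succ]
          push_cast
          field_simp
          ring

theorem exists_isIntegralCurve_of_linear [CompleteSpace E] (hc : Continuous c) (t₀ : ℝ) (x₀ : E) :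
    ∃ f : ℝ → E, f t₀ = x₀ ∧ IsIntegralCurve f fun t => c t := by
  let u := peanoBakerTerm c t₀ x₀
  have hu₀ : ∀ n, u (n + 1) t₀ = 0 := fun n => intervalIntegral.integral_same
  refine ⟨fun t => x₀ + ∑' n, u (n + 1) t, by simp [hu₀], fun t => ?_⟩
  obtain ⟨r, hr⟩ : ∃ r, |t - t₀| < r := exists_gt _
  obtain ⟨K, hK⟩ := (isCompact_closedBall t₀ r).exists_bound_of_continuousOn hc.continuousOn
  have hr₀ : 0 < r := (abs_nonneg _).trans_lt hr
  have hK₀ : 0 ≤ K := (norm_nonneg _).trans (hK t₀ (mem_closedBall_self hr₀.le))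
  have hu : ∀ n, ∀ s ∈ ball t₀ r, ‖u n s‖ ≤ ‖x₀‖ * ((K * r) ^ n / n !) := fun n s hs => by
    have hsr : |s - t₀| ≤ r := (mem_ball.1 hs).le
    refine (norm_peanoBakerTerm_le hc hK n (ball_subset_closedBall hs)).trans ?_
    gcongr
  have hsum : Summable fun n => ‖x₀‖ * ((K * r) ^ n / n !) :=
    (Real.summable_pow_div_factorial _).mul_left _
  have hut : Summable fun n => u n t := .of_norm_bounded hsum fun n => hu n t hr
  have hderiv : HasDerivAt (fun s => ∑' n, u (n + 1) s) (∑' n, c t (u n t)) t :=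
    hasDerivAt_tsum_of_isPreconnected (hsum.mul_left K) isOpen_ball
      (convex_ball t₀ r).isPreconnected
      (fun n s _ => hasDerivAt_peanoBakerTerm_succ hc n s)
      (fun n s hs =>
        (c s).le_of_opNorm_le_of_le (hK s (ball_subset_closedBall hs)) (hu n s hs))
      (mem_ball_self hr₀) (summable_zero.congr fun n => (hu₀ n).symm) hr
  rw [← (c t).map_tsum hut, hut.tsum_eq_zero_add] at hderiv
  exact hderiv.const_add x₀

theorem eqOn_Icc_of_isIntegralCurveOn_linear {f g : ℝ → E} {a b : ℝ}
    (hc : ContinuousOn c (Icc a b)) (hf : IsIntegralCurveOn f (fun t => c t) (Icc a b))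
    (hg : IsIntegralCurveOn g (fun t => c t) (Icc a b)) (ht₀ : t₀ ∈ Icc a b) (h : f t₀ = g t₀) :
    EqOn f g (Icc a b) := by
  obtain ⟨K, hK⟩ := isCompact_Icc.exists_bound_of_continuousOn hc
  have hlip : ∀ t ∈ Icc a b, LipschitzOnWith K.toNNReal (c t) univ := fun t ht =>
    ((c t).lipschitz.weaken (NNReal.le_toNNReal_of_coe_le (hK t ht))).lipschitzOnWith
  have hleft : Icc a t₀ ⊆ Icc a b := Icc_subset_Icc_right ht₀.2
  have hright : Icc t₀ b ⊆ Icc a b := Icc_subset_Icc_left ht₀.1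
  have hIic : ∀ {u : ℝ → E}, IsIntegralCurveOn u (fun t => c t) (Icc a b) →
      ∀ t ∈ Ioc a t₀, HasDerivWithinAt u (c t (u t)) (Iic t) t := fun hu t ht =>
    (hu t (hleft (Ioc_subset_Icc_self ht))).mono_of_mem_nhdsWithin <|
      Icc_mem_nhdsLE_of_mem ⟨ht.1, ht.2.trans ht₀.2⟩
  have hIci : ∀ {u : ℝ → E}, IsIntegralCurveOn u (fun t => c t) (Icc a b) →
      ∀ t ∈ Ico t₀ b, HasDerivWithinAt u (c t (u t)) (Ici t) t := fun hu t ht =>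
    (hu t (hright (Ico_subset_Icc_self ht))).mono_of_mem_nhdsWithin <|
      Icc_mem_nhdsGE_of_mem ⟨ht₀.1.trans ht.1, ht.2⟩
  rw [← Icc_union_Icc_eq_Icc ht₀.1 ht₀.2]
  exact .union
    (ODE_solution_unique_of_mem_Icc_left
      (fun t ht => hlip t (hleft (Ioc_subset_Icc_self ht)))
      (hf.continuousOn.mono hleft) (hIic hf) (fun _ _ => mem_univ _)
      (hg.continuousOn.mono hleft) (hIic hg) (fun _ _ => mem_univ _) h)
    (ODE_solution_unique_of_mem_Icc_right
      (fun t ht => hlip t (hright (Ico_subset_Icc_self ht)))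
      (hf.continuousOn.mono hright) (hIci hf) (fun _ _ => mem_univ _)
      (hg.continuousOn.mono hright) (hIci hg) (fun _ _ => mem_univ _) h)

end LinearODE

/-- `B` makes `M` a left Leibniz algebra: every `B x` is a derivation of `B`. For an alternating
bracket this is the Jacobi identity. -/
def IsLeibnizBracket {R M : Type*} [CommSemiring R] [AddCommMonoid M] [Module R M]
    (B : M →ₗ[R] M →ₗ[R] M) : Prop :=
  ∀ x y z : M, B x (B y z) = B (B x y) z + B y (B x z)

section Transport

open Set

variable {g : Type*} [NormedAddCommGroup g] [NormedSpace ℝ g] [FiniteDimensional ℝ g]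
  {B : g →ₗ[ℝ] g →ₗ[ℝ] g} {γ : ℝ → g} {t : ℝ}

theorem adL_apply (B : g →ₗ[ℝ] g →ₗ[ℝ] g) (x y : g) : adL B x y = B x y := rfl

theorem continuous_adL (B : g →ₗ[ℝ] g →ₗ[ℝ] g) : Continuous (adL B) :=
  B.toContinuousBilinearMap.continuous

theorem exists_isTransport (B : g →ₗ[ℝ] g →ₗ[ℝ] g) (hγ : Continuous γ) :
    ∃ A, IsTransport B γ A := by
  have : CompleteSpace g := FiniteDimensional.complete ℝ g
  have hc : Continuous fun t => adL B (γ t) := (continuous_adL B).comp hγ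
  obtain ⟨A, hA₀, hA⟩ := exists_isIntegralCurve_of_linear
    (c := fun t => ContinuousLinearMap.compL ℝ g g g (adL B (γ t)))
    ((ContinuousLinearMap.compL ℝ g g g).continuous.comp hc) 0 1
  have hA' : ∀ t, HasDerivAt A ((adL B (γ t)).comp (A t)) t := hA
  have hA_cont : Continuous A := continuous_iff_continuousAt.2 fun t => (hA' t).continuousAt
  exact ⟨A, hA₀, fun t _ => (hA' t).hasDerivWithinAt, (hc.clm_comp hA_cont).continuousOn⟩

theorem isTransport_transport (B : g →ₗ[ℝ] g →ₗ[ℝ] g) (hγ : Continuous γ) :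
    IsTransport B γ (transport B γ) := by
  have hex := exists_isTransport B hγ
  rw [transport, dif_pos hex]
  exact hex.choose_spec

theorem transport_zero_apply (hγ : Continuous γ) (x : g) : transport B γ 0 x = x := by
  rw [(isTransport_transport B hγ).1, one_apply_eq_self]

theorem isIntegralCurveOn_transport_apply (hγ : Continuous γ) (x : g) :
    IsIntegralCurveOn (fun t => transport B γ t x) (fun t => adL B (γ t)) (Icc 0 1) :=
  fun t ht => by
    simpa using ((isTransport_transport B hγ).2.1 t ht).clm_apply (hasDerivWithinAt_const t _ x)

theorem eq_transport_apply (hγ : Continuous γ) {u : ℝ → g} {x : g} (hu₀ : u 0 = x)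
    (hu : IsIntegralCurveOn u (fun t => adL B (γ t)) (Icc 0 1)) (ht : t ∈ Icc (0 : ℝ) 1) :
    u t = transport B γ t x :=
  eqOn_Icc_of_isIntegralCurveOn_linear ((continuous_adL B).comp hγ).continuousOn hu
    (isIntegralCurveOn_transport_apply hγ x) (left_mem_Icc.2 zero_le_one)
    (hu₀.trans (transport_zero_apply hγ x).symm) ht

theorem transport_bracket (hB : IsLeibnizBracket B) (hγ : Continuous γ) (ht : t ∈ Icc (0 : ℝ) 1)
    (x y : g) : transport B γ t (B x y) = B (transport B γ t x) (transport B γ t y) := by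
  refine (eq_transport_apply (u := fun t => B (transport B γ t x) (transport B γ t y)) hγ
    (by simp only [transport_zero_apply hγ]) (fun s hs => ?_) ht).symm
  refine (B.toContinuousBilinearMap.hasDerivWithinAt_of_bilinear
    (isIntegralCurveOn_transport_apply hγ x s hs)
    (isIntegralCurveOn_transport_apply hγ y s hs)).congr_deriv ?_
  simp only [LinearMap.toContinuousBilinearMap_apply, adL_apply]
  rw [hB (γ s), add_comm]

theorem transport_injective (B : g →ₗ[ℝ] g →ₗ[ℝ] g) (hγ : Continuous γ)
    (ht : t ∈ Icc (0 : ℝ) 1) : Function.Injective (transport B γ t) := fun x y hxy => by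
  have hcurves := eqOn_Icc_of_isIntegralCurveOn_linear ((continuous_adL B).comp hγ).continuousOn
    (isIntegralCurveOn_transport_apply hγ x) (isIntegralCurveOn_transport_apply hγ y) ht hxy
  simpa only [transport_zero_apply hγ] using hcurves (left_mem_Icc.2 zero_le_one)

theorem isUnit_transport (B : g →ₗ[ℝ] g →ₗ[ℝ] g) (hγ : Continuous γ) (ht : t ∈ Icc (0 : ℝ) 1) :
    IsUnit (transport B γ t) := by
  have : CompleteSpace g := FiniteDimensional.complete ℝ g
  have hinj := transport_injective B hγ ht
  exact ContinuousLinearMap.isUnit_iff_bijective.2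
    ⟨hinj, LinearMap.injective_iff_surjective.1 hinj⟩

end Transport

section PathGroup

open Set

variable {g : Type*} [NormedAddCommGroup g] [NormedSpace ℝ g] [FiniteDimensional ℝ g]
  {B : g →ₗ[ℝ] g →ₗ[ℝ] g} {γ δ ε ι m m' : C(Icc (0 : ℝ) 1, g)}

theorem continuous_pathExt {E : Type*} [TopologicalSpace E] (γ : C(Icc (0 : ℝ) 1, E)) :
    Continuous (pathExt γ) :=
  γ.continuous.Icc_extend'

theorem pathExt_of_mem {E : Type*} [TopologicalSpace E] (γ : C(Icc (0 : ℝ) 1, E)) {t : ℝ}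
    (ht : t ∈ Icc (0 : ℝ) 1) : pathExt γ t = γ ⟨t, ht⟩ :=
  IccExtend_of_mem _ _ ht

theorem transport_pathExt_zero_apply (t : Icc (0 : ℝ) 1) (x : g) :
    transport B (pathExt 0) t x = x :=
  (eq_transport_apply (u := fun _ => x) (continuous_pathExt 0) rfl (fun s hs => by
    simpa [pathExt_of_mem 0 hs, adL_apply] using hasDerivWithinAt_const s (Icc (0 : ℝ) 1) x)
    t.2).symm

theorem transport_pathMul_apply (hB : IsLeibnizBracket B) (hm : ∀ t, m t = pathMul B γ δ t)
    (t : Icc (0 : ℝ) 1) (x : g) :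
    transport B (pathExt m) t x =
      transport B (pathExt γ) t (transport B (pathExt δ) t x) := by
  have hγ := continuous_pathExt γ
  have hδ := continuous_pathExt δ
  refine (eq_transport_apply
    (u := fun t => transport B (pathExt γ) t (transport B (pathExt δ) t x)) (continuous_pathExt m)
    (by simp only [transport_zero_apply hγ, transport_zero_apply hδ]) (fun s hs => ?_) t.2).symm
  have hms : pathExt m s = pathExt γ s + transport B (pathExt γ) s (pathExt δ s) := by
    simpa only [pathExt_of_mem _ hs, pathMul] using hm ⟨s, hs⟩
  refine (((isTransport_transport B hγ).2.1 s hs).clm_apply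
    (isIntegralCurveOn_transport_apply hδ x s hs)).congr_deriv ?_
  simp only [hms, ContinuousLinearMap.comp_apply, adL_apply, map_add, LinearMap.add_apply,
    transport_bracket hB hγ hs]

theorem pathMul_assoc (hB : IsLeibnizBracket B) (hm : ∀ t, m t = pathMul B γ δ t)
    (hm' : ∀ t, m' t = pathMul B δ ε t) (t : Icc (0 : ℝ) 1) :
    pathMul B m ε t = pathMul B γ m' t := by
  simp only [pathMul, hm t, hm' t, transport_pathMul_apply hB hm, map_add, add_assoc]

theorem zero_pathMul (γ : C(Icc (0 : ℝ) 1, g)) (t : Icc (0 : ℝ) 1) :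
    pathMul B 0 γ t = γ t := by
  rw [pathMul, transport_pathExt_zero_apply, ContinuousMap.zero_apply, zero_add]

theorem pathMul_zero (γ : C(Icc (0 : ℝ) 1, g)) (t : Icc (0 : ℝ) 1) :
    pathMul B γ 0 t = γ t := by
  rw [pathMul, ContinuousMap.zero_apply, map_zero, add_zero]

theorem transport_pathInv (B : g →ₗ[ℝ] g →ₗ[ℝ] g) (γ : C(Icc (0 : ℝ) 1, g))
    (t : Icc (0 : ℝ) 1) : transport B (pathExt γ) t (pathInv B γ t) = -γ t := by
  have hunit := isUnit_transport B (continuous_pathExt γ) t.2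
  rw [pathInv, map_neg, ← mul_apply_eq_comp, Ring.mul_inverse_cancel _ hunit,
    one_apply_eq_self]

theorem pathMul_pathInv (hι : ∀ t, ι t = pathInv B γ t) (t : Icc (0 : ℝ) 1) :
    pathMul B γ ι t = 0 := by
  rw [pathMul, hι, transport_pathInv, add_neg_cancel]

theorem pathInv_pathMul (hB : IsLeibnizBracket B) (hι : ∀ t, ι t = pathInv B γ t)
    (t : Icc (0 : ℝ) 1) : pathMul B ι γ t = 0 := by
  have hcancel : transport B (pathExt γ) t (transport B (pathExt ι) t (γ t)) = γ t := by
    rw [← transport_pathMul_apply hB (m := 0) fun s => (pathMul_pathInv hι s).symm,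
      transport_pathExt_zero_apply]
  refine transport_injective B (continuous_pathExt γ) t.2 ?_
  rw [pathMul, map_add, hι, transport_pathInv, hcancel, neg_add_cancel, map_zero]

end PathGroup

theorem pathGroup_group_axioms_general {g : Type*}
    [NormedAddCommGroup g] [NormedSpace ℝ g] [FiniteDimensional ℝ g]
    (B : g →ₗ[ℝ] g →ₗ[ℝ] g) (hB : IsLeibnizBracket B) :
    (∀ γ δ ε m m' : C(Set.Icc (0:ℝ) 1, g),
      (∀ t, m t = pathMul B γ δ t) → (∀ t, m' t = pathMul B δ ε t) →
      ∀ t, pathMul B m ε t = pathMul B γ m' t) ∧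
    (∀ γ : C(Set.Icc (0:ℝ) 1, g),
      (∀ t, pathMul B 0 γ t = γ t) ∧ (∀ t, pathMul B γ 0 t = γ t)) ∧
    (∀ γ ι : C(Set.Icc (0:ℝ) 1, g), (∀ t, ι t = pathInv B γ t) →
      (∀ t, pathMul B γ ι t = 0) ∧ (∀ t, pathMul B ι γ t = 0)) :=
  ⟨fun _ _ _ _ _ hm hm' => pathMul_assoc hB hm hm',
    fun γ => ⟨zero_pathMul γ, pathMul_zero γ⟩,
    fun _ _ hι => ⟨pathMul_pathInv hι, pathInv_pathMul hB hι⟩⟩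

/-- The multiplication `(γ·δ)(t) = γ t + A_γ(t)(δ t)` turns the set
`P(g) = C([0,1], g)` of continuous paths into a group: it is associative, the
constant path `0` is a two-sided identity, and `ι(γ)(t) = -A_γ(t)⁻¹(γ t)` is a
two-sided inverse of `γ`. -/
theorem pathGroup_group_axioms {g : Type*}
    [NormedAddCommGroup g] [NormedSpace ℝ g] [FiniteDimensional ℝ g]
    (B : g →ₗ[ℝ] g →ₗ[ℝ] g) (hB : IsLieBracket B) :
    -- associativity: (γ·δ)·ε = γ·(δ·ε)
    (∀ γ δ ε m m' : C(Set.Icc (0:ℝ) 1, g),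
      (∀ t, m t = pathMul B γ δ t) → (∀ t, m' t = pathMul B δ ε t) →
      ∀ t, pathMul B m ε t = pathMul B γ m' t) ∧
    -- the constant path 0 is a two-sided identity
    (∀ γ : C(Set.Icc (0:ℝ) 1, g),
      (∀ t, pathMul B 0 γ t = γ t) ∧ (∀ t, pathMul B γ 0 t = γ t)) ∧
    -- ι(γ) is a two-sided inverse of γ
    (∀ γ ι : C(Set.Icc (0:ℝ) 1, g), (∀ t, ι t = pathInv B γ t) →
      (∀ t, pathMul B γ ι t = 0) ∧ (∀ t, pathMul B ι γ t = 0)) :=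
  pathGroup_group_axioms_general B hB.2
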